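/- arXiv:2510.07643 — 3 statements merged into one kernel-verified Lean document; each statement's English description precedes it below -/
import Mathlib

section
/- For any coprime positive integers a and u with a ≠ u, the cuboid polynomial P_{a,u}(t) does not factor in ℤ[t] as a product of two monic polynomials each of degree 4. -/
open Polynomial

/-- The cuboid polynomial `P_{a,u}(t) = t⁸ + 6Δ t⁶ + (Δ² − 2a²u²) t⁴ − 6Δ a²u² t² + a⁴u⁴`,
where `Δ = u² − a²`. -/
noncomputable def cuboidPoly (a u : ℤ) : Polynomial ℤ :=
  X ^ 8 + C (6 * (u ^ 2 - a ^ 2)) * X ^ 6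
    + C ((u ^ 2 - a ^ 2) ^ 2 - 2 * a ^ 2 * u ^ 2) * X ^ 4
    + C (-(6 * (u ^ 2 - a ^ 2) * (a ^ 2 * u ^ 2))) * X ^ 2
    + C (a ^ 4 * u ^ 4)

/-!
Put `D = u² - a²` and `m = a u`. Over `ℚ(√2)` the cuboid polynomial is the product of the conjugate
biquadratics `X⁴ + (3 ± 2√2) D X² - m²`, and it is irreducible over `ℚ` as soon as these are
irreducible over `ℚ(√2)`. A reducible biquadratic `X⁴ + b X² + c` has `c` or `b² - 4c` a square.
Here `c = -m²` is not one, and if `b² - 4c = (x + y√2)²`, then `(z, w) = (x / D, 2 m x / D²)` is a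
rational point with `w ≠ 0` on the genus one curve `(z² - 8)(z² - 9) = w²`. Writing `z = p / q` in
lowest terms, the coprime factors `p² - 8q²` and `p² - 9q²` are both squares `s²`, `t²`, so that
`t² + q²` and `t² + 9q²` are both squares. Comparing the parametrizations of these two Pythagorean
triples yields a smaller such pair, and infinite descent rules it out.
-/

lemma exists_mul_mul_of_mul_eq_mul {M : Type*} [CommMonoidWithZero M] [IsCancelMulZero M]
    [DecompositionMonoid M] {a b c d : M} (ha : a ≠ 0) (h : a * b = c * d) :
    ∃ p q r s, a = p * q ∧ b = r * s ∧ c = p * r ∧ d = q * s := by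
  obtain ⟨p, q, ⟨r, rfl⟩, ⟨s, rfl⟩, rfl⟩ := exists_dvd_and_dvd_of_dvd_mul (Dvd.intro b h)
  refine ⟨p, q, r, s, rfl, mul_left_cancel₀ ha ?_, rfl, rfl⟩
  rw [h, mul_mul_mul_comm]

lemma exists_eq_mul_of_mul_eq_mul_of_isCoprime {R : Type*} [CommRing R] [IsDomain R]
    {a b x y : R} (hab : IsCoprime a b) (hb : b ≠ 0) (h : a * x = b * y) :
    ∃ g, x = b * g ∧ y = a * g := by
  obtain ⟨g, rfl⟩ := hab.symm.dvd_of_dvd_mul_left (Dvd.intro y h.symm)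
  exact ⟨g, rfl, mul_left_cancel₀ hb (by linear_combination -h)⟩

lemma exists_sq_sub_sq_of_isSquare_add {x y : ℤ} (hxy : IsCoprime x y) (hx : Odd x)
    (hsq : IsSquare (x ^ 2 + y ^ 2)) :
    ∃ m k : ℤ, x = m ^ 2 - k ^ 2 ∧ y = 2 * m * k ∧ IsCoprime m k ∧ Odd (m + k) := by
  obtain ⟨z, hz⟩ := hsq
  have htriple : PythagoreanTriple x y |z| := by
    rw [PythagoreanTriple, abs_mul_abs_self]; linarith
  have hz0 : z ≠ 0 := by
    rintro rfl
    have hx0 : x ≠ 0 := by rintro rfl; simp at hx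
    have : 0 < x ^ 2 := by positivity
    nlinarith [sq_nonneg y]
  obtain ⟨m, k, hxmk, hymk, -, hmk, hpar, -⟩ := htriple.coprime_classification'
    (Int.isCoprime_iff_gcd_eq_one.1 hxy) (Int.odd_iff.1 hx) (abs_pos.2 hz0)
  exact ⟨m, k, hxmk, hymk, Int.isCoprime_iff_gcd_eq_one.2 hmk, by rw [Int.odd_iff]; omega⟩

/-- A primitive solution, with both coordinates nonzero, of Euler's concordant forms problem
`x² + y² = □`, `x² + 9y² = □`. The descent shows that there is none. -/
structure IsConcordantPair (x y : ℤ) : Prop where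
  left_ne_zero : x ≠ 0
  right_ne_zero : y ≠ 0
  isCoprime : IsCoprime x y
  isSquare_add : IsSquare (x ^ 2 + y ^ 2)
  isSquare_add_nine_mul : IsSquare (x ^ 2 + 9 * y ^ 2)

lemma isSquare_of_isSquare_sq_mul {p n : ℤ} (hp : p ≠ 0) (h : IsSquare (p ^ 2 * n)) :
    IsSquare n := by
  obtain ⟨z, hz⟩ := h
  obtain ⟨w, rfl⟩ : p ∣ z := (Int.pow_dvd_pow_iff two_ne_zero).1 ⟨n, by rw [hz, sq]⟩
  exact ⟨w, mul_left_cancel₀ (pow_ne_zero 2 hp) (by linear_combination hz)⟩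

lemma IsConcordantPair.of_three_mul {x y : ℤ} (h : IsConcordantPair (3 * x) y) :
    IsConcordantPair y x where
  left_ne_zero := h.right_ne_zero
  right_ne_zero := right_ne_zero_of_mul h.left_ne_zero
  isCoprime := h.isCoprime.of_mul_left_right.symm
  isSquare_add := isSquare_of_isSquare_sq_mul three_ne_zero <| by
    convert h.isSquare_add_nine_mul using 1; ring
  isSquare_add_nine_mul := by convert h.isSquare_add using 1; ring

lemma three_mul_sq_sub_sq_ne {m k M K : ℤ} (hmk : Odd (m + k)) (hMK : Odd (M + K))
    (hmul : m * k = M * K) : 3 * (m ^ 2 - k ^ 2) ≠ M ^ 2 - K ^ 2 := by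
  intro h
  wlog hm : Odd m generalizing m k M K
  · have hk : Odd k := (Int.odd_add'.1 hmk).2 (Int.not_odd_iff_even.1 hm)
    exact this (add_comm m k ▸ hmk) (add_comm M K ▸ hMK) (by linarith) (by linarith) hk
  obtain ⟨k, rfl⟩ : 2 ∣ k := ((Int.odd_add.1 hmk).1 hm).two_dvd
  have hm8 := Int.eight_dvd_sq_sub_one_of_odd hm
  have hK : Odd K := by
    by_contra hK
    rw [Int.not_odd_iff_even] at hK
    have hM8 := Int.eight_dvd_sq_sub_one_of_odd ((Int.odd_add.1 hMK).2 hK)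
    obtain ⟨K, rfl⟩ := hK.two_dvd
    rw [mul_pow, mul_pow] at h
    omega
  obtain ⟨M, rfl⟩ : 2 ∣ M := ((Int.odd_add'.1 hMK).1 hK).two_dvd
  have hparity : Even k ↔ Even M := by
    have hmul' : m * k = M * K := by linarith
    simpa [Int.even_mul, Int.not_even_iff_odd.2 hm, Int.not_even_iff_odd.2 hK] using
      congrArg Even hmul'
  obtain ⟨c, hc⟩ : Even (M ^ 2 + 3 * k ^ 2) := by
    simp [Int.even_add, Int.even_mul, Int.even_pow, hparity, show ¬ Even (3 : ℤ) by decide]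
  have hK8 := Int.eight_dvd_sq_sub_one_of_odd hK
  rw [mul_pow, mul_pow] at h
  omega

lemma odd_of_sq_add_sq_eq_sq_mul {p q r s g : ℤ} (hps : IsCoprime p s)
    (hodd : Odd (p * q + r * s)) (hr : p ^ 2 + s ^ 2 = r ^ 2 * g)
    (hq : s ^ 2 + 9 * p ^ 2 = q ^ 2 * g) : Odd g := by
  by_contra hg
  obtain ⟨g, rfl⟩ : 2 ∣ g := (Int.not_odd_iff_even.1 hg).two_dvd
  have hparity : Even p ↔ Even s := by
    have : Even (p ^ 2 + s ^ 2) := hr ▸ ((even_two_mul g).mul_left _)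
    simpa [Int.even_add, Int.even_pow] using this
  have hp : Odd p := by
    by_contra hp
    rw [Int.not_odd_iff_even] at hp
    exact Int.prime_two.not_isUnit (hps.isUnit_of_dvd' hp.two_dvd (hparity.1 hp).two_dvd)
  have hs : Odd s := by rwa [← Int.not_even_iff_odd, ← hparity, Int.not_even_iff_odd]
  have hp8 := Int.eight_dvd_sq_sub_one_of_odd hp
  have hs8 := Int.eight_dvd_sq_sub_one_of_odd hs
  rcases Int.even_or_odd r with hr_even | hr_odd
  · obtain ⟨r, rfl⟩ := hr_even.two_dvd
    have : p ^ 2 + s ^ 2 = 8 * (r ^ 2 * g) := by linear_combination hr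
    omega
  · have hq_even : Even q := by
      have hpq : Even (p * q) := (Int.odd_add'.1 hodd).1 (hr_odd.mul hs)
      exact (Int.even_mul.1 hpq).resolve_left (Int.not_even_iff_odd.2 hp)
    obtain ⟨q, rfl⟩ := hq_even.two_dvd
    have : s ^ 2 + 9 * p ^ 2 = 8 * (q ^ 2 * g) := by linear_combination hq
    omega

lemma eq_one_of_sq_add_sq_eq_sq_mul {p q r s g : ℤ} (hps : IsCoprime p s)
    (hodd : Odd (p * q + r * s)) (hr : p ^ 2 + s ^ 2 = r ^ 2 * g)
    (hq : s ^ 2 + 9 * p ^ 2 = q ^ 2 * g) : g = 1 := by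
  have hg8 : g ∣ 2 ^ 3 := by
    obtain ⟨c, d, hcd⟩ : IsCoprime (p ^ 2) (s ^ 2) := hps.pow
    exact ⟨c * (q ^ 2 - r ^ 2) + d * (9 * r ^ 2 - q ^ 2), by
      linear_combination (-8) * hcd + (9 * d - c) * hr + (c - d) * hq⟩
  have hg2 : IsCoprime g 2 :=
    Int.isCoprime_two_right.2 (odd_of_sq_add_sq_eq_sq_mul hps hodd hr hq)
  rcases Int.isUnit_iff.1 (hg2.pow_right.isUnit_of_dvd' dvd_rfl hg8) with rfl | rfl
  · rfl
  · have hp : p = 0 := by nlinarith [sq_nonneg p, sq_nonneg s, sq_nonneg r]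
    have hs : s = 0 := by nlinarith [sq_nonneg p, sq_nonneg s, sq_nonneg r]
    simp [hp, hs] at hodd

lemma IsConcordantPair.exists_of_sq_sub_sq_eq {m k M K : ℤ} (hm : m ≠ 0) (hk : k ≠ 0)
    (hco : IsCoprime m k) (hodd : Odd (m + k)) (hmul : m * k = M * K)
    (h : m ^ 2 - k ^ 2 = (3 * M) ^ 2 - K ^ 2) :
    ∃ x y : ℤ, IsConcordantPair x y ∧ x * y ∣ m * k := by
  obtain ⟨p, q, r, s, rfl, rfl, rfl, rfl⟩ := exists_mul_mul_of_mul_eq_mul hm hmul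
  have hr0 : r ≠ 0 := left_ne_zero_of_mul hk
  have hqr : IsCoprime (q ^ 2) (r ^ 2) := hco.of_mul_left_right.of_mul_right_left.pow
  have hps : IsCoprime p s := hco.of_mul_left_left.of_mul_right_right
  obtain ⟨g, hr, hq⟩ := exists_eq_mul_of_mul_eq_mul_of_isCoprime hqr (pow_ne_zero 2 hr0)
    (show q ^ 2 * (p ^ 2 + s ^ 2) = r ^ 2 * (s ^ 2 + 9 * p ^ 2) by linear_combination h)
  obtain rfl := eq_one_of_sq_add_sq_eq_sq_mul hps hodd hr hq
  refine ⟨s, p, ⟨right_ne_zero_of_mul hk, left_ne_zero_of_mul hm, hps.symm, ⟨r, ?_⟩, ⟨q, ?_⟩⟩,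
    ⟨q * r, by ring⟩⟩
  · linear_combination hr
  · linear_combination hq

lemma IsConcordantPair.odd_left {x y : ℤ} (h : IsConcordantPair x y) (h3 : ¬ 3 ∣ x) : Odd x := by
  by_contra hx
  have hy : Odd y := by
    by_contra hy
    rw [Int.not_odd_iff_even] at hx hy
    exact Int.prime_two.not_isUnit (h.isCoprime.isUnit_of_dvd' hx.two_dvd hy.two_dvd)
  have hco : IsCoprime (3 * y) x :=
    .mul_left (Int.prime_three.coprime_iff_not_dvd.2 h3) h.isCoprime.symm
  obtain ⟨m, k, hy_eq, hx_eq, -, hmk⟩ := exists_sq_sub_sq_of_isSquare_add h.isCoprime.symm hy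
    (add_comm (x ^ 2) _ ▸ h.isSquare_add)
  obtain ⟨M, K, hy_eq', hx_eq', -, hMK⟩ := exists_sq_sub_sq_of_isSquare_add hco
    (Odd.mul (by decide) hy) (by convert h.isSquare_add_nine_mul using 1; ring)
  exact three_mul_sq_sub_sq_ne hmk hMK (by linarith) (by rw [← hy_eq, ← hy_eq'])

lemma IsConcordantPair.exists_mul_dvd {x y : ℤ} (h : IsConcordantPair x y) (h3 : ¬ 3 ∣ x) :
    ∃ x' y' : ℤ, IsConcordantPair x' y' ∧ 2 * (x' * y') ∣ y := by
  have hco : IsCoprime x (3 * y) :=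
    .mul_right (Int.prime_three.coprime_iff_not_dvd.2 h3).symm h.isCoprime
  obtain ⟨m, k, rfl, rfl, hmk, hodd⟩ :=
    exists_sq_sub_sq_of_isSquare_add h.isCoprime (h.odd_left h3) h.isSquare_add
  obtain ⟨M, K, hx, hy, -, -⟩ := exists_sq_sub_sq_of_isSquare_add hco (h.odd_left h3)
    (by convert h.isSquare_add_nine_mul using 1; ring)
  have hk : k ≠ 0 := right_ne_zero_of_mul h.right_ne_zero
  have hm : m ≠ 0 := right_ne_zero_of_mul (left_ne_zero_of_mul h.right_ne_zero)
  have hMK : 3 ∣ M * K := ⟨m * k, by linarith⟩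
  simp only [mul_assoc (2 : ℤ) m k]
  rcases Int.prime_three.dvd_or_dvd hMK with ⟨M, rfl⟩ | ⟨K, rfl⟩
  · obtain ⟨x', y', hpair, hdvd⟩ := exists_of_sq_sub_sq_eq (M := M) (K := K) hm hk hmk hodd
      (by linarith) hx
    exact ⟨x', y', hpair, mul_dvd_mul_left 2 hdvd⟩
  · obtain ⟨x', y', hpair, hdvd⟩ := exists_of_sq_sub_sq_eq (M := K) (K := M) hk hm hmk.symm
      (add_comm m k ▸ hodd) (by linarith) (by linarith)
    exact ⟨x', y', hpair, mul_dvd_mul_left 2 (mul_comm k m ▸ hdvd)⟩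

lemma IsConcordantPair.exists_natAbs_lt {x y : ℤ} (h : IsConcordantPair x y) :
    ∃ x' y' : ℤ, IsConcordantPair x' y' ∧ (x' * y').natAbs < (x * y).natAbs := by
  by_cases h3 : 3 ∣ x
  · obtain ⟨x, rfl⟩ := h3
    have hyx := h.of_three_mul
    have hpos : 0 < (y * x).natAbs :=
      Int.natAbs_pos.2 (mul_ne_zero hyx.left_ne_zero hyx.right_ne_zero)
    exact ⟨y, x, hyx, by rw [show 3 * x * y = 3 * (y * x) by ring]; omega⟩
  · obtain ⟨x', y', h', hdvd⟩ := h.exists_mul_dvd h3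
    have hpos : 0 < (x' * y').natAbs :=
      Int.natAbs_pos.2 (mul_ne_zero h'.left_ne_zero h'.right_ne_zero)
    have hle : (2 * (x' * y')).natAbs ≤ (x * y).natAbs :=
      Int.natAbs_le_of_dvd_ne_zero (hdvd.mul_left x) (mul_ne_zero h.left_ne_zero h.right_ne_zero)
    exact ⟨x', y', h', by omega⟩

theorem not_isConcordantPair (x y : ℤ) : ¬ IsConcordantPair x y := by
  induction hn : (x * y).natAbs using Nat.strong_induction_on generalizing x y with
  | _ n ih =>
    intro h
    obtain ⟨x', y', h', hlt⟩ := h.exists_natAbs_lt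
    exact ih _ (hn ▸ hlt) x' y' rfl h'

lemma three_dvd_of_dvd_sq_add_sq {x y : ℤ} (h : 3 ∣ x ^ 2 + y ^ 2) : 3 ∣ x := by
  have hmod : ∀ a b : ZMod 3, a ^ 2 + b ^ 2 = 0 → a = 0 := by decide
  rw [← Nat.cast_ofNat, ← ZMod.intCast_zmod_eq_zero_iff_dvd] at h ⊢
  exact hmod x y (by exact_mod_cast h)

lemma sq_add_sq_ne_nine_mul_sq {p q s t : ℤ} (hpq : IsCoprime p q)
    (hs : p ^ 2 + s ^ 2 = 8 * q ^ 2) : p ^ 2 + t ^ 2 ≠ 9 * q ^ 2 := by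
  intro ht
  have hp : 3 ∣ p := three_dvd_of_dvd_sq_add_sq (y := t) ⟨3 * q ^ 2, by linarith⟩
  have hq : 3 ∣ q := by
    obtain ⟨p, rfl⟩ := hp
    exact three_dvd_of_dvd_sq_add_sq (y := s) ⟨3 * q ^ 2 - 3 * p ^ 2, by linarith⟩
  exact Int.prime_three.not_isUnit (hpq.isUnit_of_dvd' hp hq)

lemma isConcordantPair_of_eq_sq {p q s t : ℤ} (hpq : IsCoprime p q) (hq : q ≠ 0) (ht : t ≠ 0)
    (hs8 : p ^ 2 - 8 * q ^ 2 = s ^ 2) (ht9 : p ^ 2 - 9 * q ^ 2 = t ^ 2) :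
    IsConcordantPair t q where
  left_ne_zero := ht
  right_ne_zero := hq
  isCoprime := by
    rw [← IsCoprime.pow_iff two_pos two_pos, ← ht9,
      show p ^ 2 - 9 * q ^ 2 = p ^ 2 + q ^ 2 * (-9) by ring]
    exact hpq.pow.add_mul_left_left _
  isSquare_add := ⟨s, by linear_combination hs8 - ht9⟩
  isSquare_add_nine_mul := ⟨p, by linear_combination -ht9⟩

lemma eq_zero_of_isCoprime_of_mul_eq_sq {p q w : ℤ} (hpq : IsCoprime p q) (hq : q ≠ 0)
    (h : (p ^ 2 - 8 * q ^ 2) * (p ^ 2 - 9 * q ^ 2) = w ^ 2) : w = 0 := by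
  have hco : IsCoprime (p ^ 2 - 8 * q ^ 2) (p ^ 2 - 9 * q ^ 2) := by
    obtain ⟨c, d, hcd⟩ : IsCoprime (p ^ 2) (q ^ 2) := hpq.pow
    exact ⟨9 * c + d, -8 * c - d, by linear_combination hcd⟩
  by_contra hw
  have hw2 : 0 < w ^ 2 := by positivity
  obtain ⟨s, hs⟩ := Int.sq_of_isCoprime hco h
  obtain ⟨t, ht⟩ := Int.sq_of_isCoprime hco.symm (mul_comm (p ^ 2 - 8 * q ^ 2) _ ▸ h)
  have ht0 : t ≠ 0 := by
    rintro rfl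
    rcases ht with ht | ht <;> exact hw (by simpa [ht] using h.symm)
  rcases hs with hs | hs <;> rcases ht with ht | ht
  · exact not_isConcordantPair t q (isConcordantPair_of_eq_sq hpq hq ht0 hs ht)
  · rw [hs, ht] at h; nlinarith [mul_nonneg (sq_nonneg s) (sq_nonneg t)]
  · rw [hs, ht] at h; nlinarith [mul_nonneg (sq_nonneg s) (sq_nonneg t)]
  · exact sq_add_sq_ne_nine_mul_sq hpq (s := s) (t := t) (by linarith) (by linarith)

theorem eq_zero_of_sq_sub_eight_mul_sq_sub_nine_eq_sq {z w : ℚ}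
    (h : (z ^ 2 - 8) * (z ^ 2 - 9) = w ^ 2) : w = 0 := by
  obtain ⟨p, q, hq, hpq, rfl⟩ : ∃ p q : ℤ, q ≠ 0 ∧ IsCoprime p q ∧ z = p / q :=
    ⟨z.num, z.den, by simp, Rat.isCoprime_num_den z, by simp [Rat.num_div_den]⟩
  have hq' : (q : ℚ) ≠ 0 := by exact_mod_cast hq
  have hsq : (((p ^ 2 - 8 * q ^ 2) * (p ^ 2 - 9 * q ^ 2) : ℤ) : ℚ) = (w * q ^ 2) ^ 2 := by
    push_cast
    rw [mul_pow, ← h]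
    field_simp
  obtain ⟨n, hn⟩ : IsSquare ((p ^ 2 - 8 * q ^ 2) * (p ^ 2 - 9 * q ^ 2)) := by
    rw [← Rat.isSquare_intCast_iff, hsq]
    exact .sq _
  have hn0 : n = 0 := eq_zero_of_isCoprime_of_mul_eq_sq hpq hq (by rw [hn, sq])
  simpa [hn, hn0, hq'] using hsq.symm

lemma irreducible_of_map_eq_mul {R S : Type*} [CommRing R] [IsDomain R] [CommRing S] [IsDomain S]
    (f : R →+* S) {P : R[X]} {Q Q' : S[X]} (hP : P.Monic)
    (hQ : Prime Q) (hQ' : Irreducible Q') (hmonic : Q.Monic) (hlift : Q ∉ lifts f)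
    (hmap : P.map f = Q * Q') : Irreducible P := by
  have natDegree_eq_zero : ∀ A B : R[X], A.Monic → B.Monic → A * B = P → Q ∣ A.map f →
      B.natDegree = 0 := by
    rintro A B hA hB rfl ⟨T, hT⟩
    have hTB : Q' = T * B.map f := by
      rw [Polynomial.map_mul, hT, mul_assoc] at hmap
      exact (mul_left_cancel₀ hQ.ne_zero hmap).symm
    rcases hQ'.isUnit_or_isUnit hTB with hT_unit | hB_unit
    · have hT_monic : T.Monic := hmonic.of_mul_monic_left (hT ▸ hA.map f)
      rw [hT_monic.eq_one_of_isUnit hT_unit, mul_one] at hT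
      exact absurd ((mem_lifts Q).2 ⟨A, hT⟩) hlift
    · rw [← hB.natDegree_map f, natDegree_eq_zero_of_isUnit hB_unit]
  refine hP.irreducible_iff_natDegree.2 ⟨?_, fun A B hA hB hAB ↦ ?_⟩
  · rintro rfl
    exact hQ.not_isUnit (.of_mul_eq_one Q' (by rw [← hmap, Polynomial.map_one]))
  have hdvd : Q ∣ A.map f * B.map f := by
    rw [← Polynomial.map_mul, hAB, hmap]
    exact dvd_mul_right Q Q'
  rcases hQ.dvd_or_dvd hdvd with hA_dvd | hB_dvd
  · exact .inr (natDegree_eq_zero A B hA hB hAB hA_dvd)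
  · exact .inl (natDegree_eq_zero B A hB hA (mul_comm A B ▸ hAB) hB_dvd)

section Biquadratic

variable {R : Type*} [CommRing R]

/-- The biquadratic polynomial `X⁴ + b X² + c`, the shape of the two conjugate factors of the cuboid
polynomial over `ℚ(√2)`. -/
noncomputable def biquadratic (b c : R) : R[X] := X ^ 4 + C b * X ^ 2 + C c

lemma natDegree_biquadratic [Nontrivial R] (b c : R) : (biquadratic b c).natDegree = 4 := by
  unfold biquadratic; compute_degree!

lemma monic_biquadratic (b c : R) : (biquadratic b c).Monic := by
  unfold biquadratic; monicity!

lemma biquadratic_mul_biquadratic (b b' c : R) :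
    biquadratic b c * biquadratic b' c = X ^ 8 + C (b + b') * X ^ 6 +
      C (b * b' + 2 * c) * X ^ 4 + C ((b + b') * c) * X ^ 2 + C (c ^ 2) := by
  simp only [biquadratic, map_add, map_mul, map_pow, map_ofNat]
  ring

lemma isSquare_discrim_of_isRoot_biquadratic {b c x : R} (hx : (biquadratic b c).IsRoot x) :
    IsSquare (b ^ 2 - 4 * c) := by
  have hroot : x ^ 4 + b * x ^ 2 + c = 0 := by simpa [biquadratic] using hx
  exact ⟨2 * x ^ 2 + b, by linear_combination -4 * hroot⟩

lemma eq_X_sq_add_of_natDegree_eq_two {A : R[X]} (hA : A.Monic) (hdeg : A.natDegree = 2) :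
    A = X ^ 2 + C (A.coeff 1) * X + C (A.coeff 0) := by
  conv_lhs => rw [hA.as_sum, hdeg, Finset.sum_range_succ, Finset.sum_range_one]
  ring

lemma isSquare_or_of_mul_eq_biquadratic [IsDomain R] {A B : R[X]} {b c : R} (hA : A.Monic)
    (hB : B.Monic) (hA2 : A.natDegree = 2) (hB2 : B.natDegree = 2)
    (h : A * B = biquadratic b c) :
    IsSquare (b ^ 2 - 4 * c) ∨ IsSquare c := by
  obtain ⟨p, r, rfl⟩ : ∃ p r, A = X ^ 2 + C p * X + C r :=
    ⟨_, _, eq_X_sq_add_of_natDegree_eq_two hA hA2⟩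
  obtain ⟨q, s, rfl⟩ : ∃ q s, B = X ^ 2 + C q * X + C s :=
    ⟨_, _, eq_X_sq_add_of_natDegree_eq_two hB hB2⟩
  have hexp : X ^ 4 + C (p + q) * X ^ 3 + C (r + s + p * q) * X ^ 2 + C (p * s + q * r) * X +
      C (r * s) = X ^ 4 + C b * X ^ 2 + C c := by
    rw [← biquadratic, ← h]
    simp only [map_add, map_mul]
    ring
  have h3 : p + q = 0 := by
    simpa [coeff_X, coeff_C, -map_add, -map_mul] using congrArg (coeff · 3) hexp
  have h2 : r + s + p * q = b := by
    simpa [coeff_X, coeff_C, -map_add, -map_mul] using congrArg (coeff · 2) hexp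
  have h1 : p * s + q * r = 0 := by
    simpa [coeff_X, coeff_C, -map_add, -map_mul] using congrArg (coeff · 1) hexp
  have h0 : r * s = c := by
    simpa [coeff_X, coeff_C, -map_add, -map_mul] using congrArg (coeff · 0) hexp
  obtain rfl : q = -p := by linear_combination h3
  have hp : p * (s - r) = 0 := by linear_combination h1
  subst h0 h2
  rcases mul_eq_zero.1 hp with rfl | hsr
  · exact .inl ⟨r - s, by ring⟩
  · exact .inr ⟨r, by linear_combination r * hsr⟩

theorem irreducible_biquadratic [IsDomain R] {b c : R} (hdiscrim : ¬ IsSquare (b ^ 2 - 4 * c))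
    (hc : ¬ IsSquare c) : Irreducible (biquadratic b c) := by
  refine (monic_biquadratic b c).irreducible_iff_natDegree'.2 ⟨?_, fun A B hA hB hAB hdeg ↦ ?_⟩
  · intro h
    simpa [natDegree_biquadratic] using congrArg natDegree h
  have hsum : A.natDegree + B.natDegree = 4 := by
    rw [← hA.natDegree_mul hB, hAB, natDegree_biquadratic]
  rw [natDegree_biquadratic, Finset.mem_Ioc] at hdeg
  obtain hB1 | hB2 : B.natDegree = 1 ∨ B.natDegree = 2 := by omega
  · refine hdiscrim (isSquare_discrim_of_isRoot_biquadratic (x := -B.coeff 0) ?_)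
    rw [← hAB, hB.eq_X_add_C hB1]
    simp
  · exact (isSquare_or_of_mul_eq_biquadratic hA hB (by omega) hB2 hAB).elim hdiscrim hc

end Biquadratic

open scoped QuadraticAlgebra

/-- The field `ℚ(√2)`, with elements `⟨x, y⟩` standing for `x + y √2`. -/
abbrev RatSqrtTwo : Type := QuadraticAlgebra ℚ 2 0

instance fact_sq_ne_two : Fact (∀ r : ℚ, r ^ 2 ≠ 2 + 0 * r) where
  out r h := by
    have hsq : ¬ IsSquare (2 : ℚ) := by norm_num
    exact hsq ⟨r, by linear_combination -h⟩

lemma not_isSquare_neg_sq {m : ℚ} (hm : m ≠ 0) : ¬ IsSquare (⟨-m ^ 2, 0⟩ : RatSqrtTwo) := by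
  rintro ⟨⟨x, y⟩, h⟩
  have hre : -m ^ 2 = x * x + 2 * y * y := by
    simpa using congrArg QuadraticAlgebra.re h
  have hm2 : 0 < m ^ 2 := by positivity
  nlinarith [sq_nonneg x, sq_nonneg y]

-- `E = ± D` covers the two conjugate factors at once.
lemma not_isSquare_discrim {D E m : ℚ} (hD : D ≠ 0) (hE : E ^ 2 = D ^ 2) (hm : m ≠ 0) :
    ¬ IsSquare ((⟨3 * D, 2 * E⟩ : RatSqrtTwo) ^ 2 - 4 * ⟨-m ^ 2, 0⟩) := by
  rintro ⟨⟨x, y⟩, h⟩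
  have hre : 17 * D ^ 2 + 4 * m ^ 2 = x ^ 2 + 2 * y ^ 2 := by
    have : 3 * D * (3 * D) + 2 * (2 * E) * (2 * E) + 4 * (m * m) = x * x + 2 * y * y := by
      simpa [sq] using congrArg QuadraticAlgebra.re h
    linear_combination this - 8 * hE
  have him : x * y = 6 * D * E := by
    have : 3 * D * (2 * E) + 2 * E * (3 * D) = x * y + y * x := by
      simpa [sq] using congrArg QuadraticAlgebra.im h
    linear_combination -this / 2
  have hE0 : E ≠ 0 := by
    rintro rfl
    exact hD (by simpa using hE.symm)
  have hx : x ≠ 0 := left_ne_zero_of_mul (him ▸ by positivity : x * y ≠ 0)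
  have hcurve : ((x / D) ^ 2 - 8) * ((x / D) ^ 2 - 9) = (2 * m * x / D ^ 2) ^ 2 := by
    field_simp
    linear_combination (-x ^ 2) * hre - (2 * (x * y + 6 * D * E)) * him - 72 * D ^ 2 * hE
  have hw : 2 * m * x / D ^ 2 ≠ 0 := by positivity
  exact hw (eq_zero_of_sq_sub_eight_mul_sq_sub_nine_eq_sq hcurve)

lemma irreducible_biquadratic_ratSqrtTwo {D E m : ℚ} (hD : D ≠ 0) (hE : E ^ 2 = D ^ 2)
    (hm : m ≠ 0) : Irreducible (biquadratic (⟨3 * D, 2 * E⟩ : RatSqrtTwo) ⟨-m ^ 2, 0⟩) :=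
  irreducible_biquadratic (not_isSquare_discrim hD hE hm) (not_isSquare_neg_sq hm)

lemma biquadratic_not_mem_lifts {D : ℚ} (hD : D ≠ 0) (c : RatSqrtTwo) :
    biquadratic ⟨3 * D, 2 * D⟩ c ∉ lifts (Int.castRingHom RatSqrtTwo) := by
  intro h
  obtain ⟨n, hn⟩ := (lifts_iff_coeff_lifts _).1 h 2
  have hcoeff : (biquadratic ⟨3 * D, 2 * D⟩ c).coeff 2 = ⟨3 * D, 2 * D⟩ := by
    simp [biquadratic]
  rw [hcoeff] at hn
  exact hD (by simpa using congrArg QuadraticAlgebra.im hn)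

lemma map_cuboidPoly_eq_mul (a u : ℤ) : (cuboidPoly a u).map (Int.castRingHom RatSqrtTwo) =
    biquadratic ⟨3 * (u ^ 2 - a ^ 2), 2 * (u ^ 2 - a ^ 2)⟩ ⟨-(a * u) ^ 2, 0⟩ *
      biquadratic ⟨3 * (u ^ 2 - a ^ 2), 2 * -(u ^ 2 - a ^ 2)⟩ ⟨-(a * u) ^ 2, 0⟩ := by
  rw [biquadratic_mul_biquadratic]
  simp only [cuboidPoly, Polynomial.map_add, Polynomial.map_mul, Polynomial.map_pow, map_X, map_C]
  congr <;> ext <;> simp [pow_succ, -mul_eq_zero] <;> ring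

lemma monic_cuboidPoly (a u : ℤ) : (cuboidPoly a u).Monic := by
  unfold cuboidPoly; monicity!

theorem cuboidPoly_no_4_4_factorization_general {a u : ℤ} (ha : a ≠ 0) (hu : u ≠ 0)
    (hne : a ^ 2 ≠ u ^ 2) : Irreducible (cuboidPoly a u) := by
  have hD : (u ^ 2 - a ^ 2 : ℚ) ≠ 0 := by exact_mod_cast sub_ne_zero.2 hne.symm
  have hm : (a * u : ℚ) ≠ 0 := by exact_mod_cast mul_ne_zero ha hu
  exact irreducible_of_map_eq_mul _ (monic_cuboidPoly a u)
    (irreducible_biquadratic_ratSqrtTwo hD rfl hm).prime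
    (irreducible_biquadratic_ratSqrtTwo hD (neg_sq _) hm)
    (monic_biquadratic _ _) (biquadratic_not_mem_lifts hD _) (map_cuboidPoly_eq_mul a u)

theorem cuboidPoly_no_4_4_factorization (a u : ℤ) (ha : 0 < a) (hu : 0 < u)
    (hco : IsCoprime a u) (hne : a ≠ u) :
    ¬ ∃ F G : Polynomial ℤ, F.Monic ∧ G.Monic ∧ F.degree = 4 ∧ G.degree = 4 ∧
      cuboidPoly a u = F * G := by
  rintro ⟨F, G, -, -, hF, hG, hFG⟩
  have hirr := cuboidPoly_no_4_4_factorization_general ha.ne' hu.ne'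
    ((sq_eq_sq₀ ha.le hu.le).not.2 hne)
  rcases hirr.isUnit_or_isUnit hFG with h | h
  · exact absurd (degree_eq_zero_of_isUnit h) (by simp [hF])
  · exact absurd (degree_eq_zero_of_isUnit h) (by simp [hG])
end

section
/- Suppose P_{a,u}(t) = F(t)·G(t) with F, G ∈ ℤ[t] monic of degree 4. Then, after possibly swapping F and G, one of the following holds: (E) both factors are even polynomials, i.e. F(−t) = F(t) and G(−t) = G(t); or (C) G(t) = F(−t). -/
open Polynomial

/-!
Write `P(t) = Q(t²)` with `Q` quartic. Completing the square, `Q(s) = 0` reads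
`(s² + 3Δs − a²u²)² = 2 (2Δs)²`. As `2` is not a rational square, a rational root `s` would have
`Δs = 0`, hence `s = 0`, but `Q(0) = a⁴u⁴ ≠ 0`: so `Q` has no rational root.
Split `F = E(t²) + t O(t²)`, where `E = contract 2 F` and `O = contract 2 F.divX`; since
`deg F = 4`, the odd part `O` has degree at most one. If `O = 0`, then `F` is even, and so is the
cofactor `G`. Otherwise `Q`, having no rational root, is coprime to both `s` and `O(s)`, so `F`, a
divisor of `Q(t²)`, is coprime to `2t O(t²) = F(t) − F(−t)`, that is, to `F(−t)`. As `F(−t)`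
divides `P(−t) = P(t) = F(t) G(t)`, it divides `G`, hence equals `G`.
-/

section EvenOddDecomposition

variable {R : Type*}

theorem expand_contract_add_X_mul_expand_contract_divX [CommSemiring R] (F : R[X]) :
    expand R 2 (contract 2 F) + X * expand R 2 (contract 2 F.divX) = F := by
  ext n
  rcases n with _ | n
  · simp [coeff_expand, coeff_contract]
  · simp only [coeff_add, coeff_X_mul, coeff_expand two_pos, coeff_contract two_ne_zero, coeff_divX]
    rcases Nat.even_or_odd' n with ⟨k, rfl | rfl⟩
    · have not_dvd_succ : ¬ 2 ∣ 2 * k + 1 := by lia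
      simp [not_dvd_succ, mul_comm k]
    · have not_dvd : ¬ 2 ∣ 2 * k + 1 := by lia
      have dvd_succ : 2 ∣ 2 * k + 1 + 1 := by lia
      simp [not_dvd, dvd_succ, Nat.div_mul_cancel dvd_succ]

theorem natDegree_contract_two_divX_le [CommSemiring R] {F : R[X]} {n : ℕ}
    (hF : F.natDegree ≤ 2 * n + 2) : (contract 2 F.divX).natDegree ≤ n := by
  refine natDegree_le_iff_coeff_eq_zero.mpr fun k hk => ?_
  rw [coeff_contract two_ne_zero, coeff_divX]
  exact coeff_eq_zero_of_natDegree_lt (by lia)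

variable [CommRing R]

theorem expand_two_comp_neg_X (Q : R[X]) : (expand R 2 Q).comp (-X) = expand R 2 Q := by
  simp [expand_eq_comp_X_pow, comp_assoc]

theorem self_sub_comp_neg_X (F : R[X]) :
    F - F.comp (-X) = C 2 * (X * expand R 2 (contract 2 F.divX)) := by
  conv_lhs => rw [← expand_contract_add_X_mul_expand_contract_divX F]
  simp only [add_comp, mul_comp, X_comp, expand_two_comp_neg_X, map_ofNat]
  ring

theorem isCoprime_comp_neg_X_of_isCoprime_contract_divX (h2 : IsUnit (2 : R)) {Q F : R[X]}
    (hFQ : F ∣ expand R 2 Q) (hX : IsCoprime Q X) (hodd : IsCoprime Q (contract 2 F.divX)) :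
    IsCoprime F (F.comp (-X)) := by
  have coprime_X : IsCoprime F X := by
    have coprime_X_sq : IsCoprime (expand R 2 Q) (X ^ 2) := by
      simpa only [expand_X] using (isCoprime_expand two_ne_zero).mpr hX
    exact ((IsCoprime.pow_right_iff two_pos).mp coprime_X_sq).of_isCoprime_of_dvd_left hFQ
  have coprime_odd : IsCoprime F (expand R 2 (contract 2 F.divX)) :=
    ((isCoprime_expand two_ne_zero).mpr hodd).of_isCoprime_of_dvd_left hFQ
  have coprime_sub : IsCoprime F (F - F.comp (-X)) := by
    rw [self_sub_comp_neg_X, isCoprime_mul_unit_left_right (h2.map C)]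
    exact coprime_X.mul_right coprime_odd
  simpa using coprime_sub.neg_right.add_mul_left_right 1

theorem monic_comp_neg_X_of_even_natDegree {F : R[X]} (hF : F.Monic) (hdeg : Even F.natDegree) :
    (F.comp (-X)).Monic := by
  rw [Monic, comp_neg_X_leadingCoeff_eq, hF.leadingCoeff, hdeg.neg_one_pow, one_mul]

end EvenOddDecomposition

section DegreeFourFactors

variable {R K : Type*} [CommRing R] [Field K]

theorem isCoprime_of_natDegree_le_one_of_forall_not_isRoot {Q L : K[X]}
    (hQ : ∀ x, ¬ Q.IsRoot x) (hL : L ≠ 0) (hdeg : L.natDegree ≤ 1) : IsCoprime Q L := by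
  rcases Nat.le_one_iff_eq_zero_or_eq_one.mp hdeg with hdeg | hdeg
  · have degree_eq_zero : L.degree = 0 := (degree_eq_iff_natDegree_eq hL).mpr hdeg
    have isUnit_L : IsUnit L := isUnit_iff_degree_eq_zero.mpr degree_eq_zero
    exact isCoprime_one_right.of_isCoprime_of_dvd_right isUnit_L.dvd
  · have degree_eq_one : L.degree = 1 := (degree_eq_iff_natDegree_eq hL).mpr hdeg
    obtain ⟨x, hx⟩ := exists_root_of_degree_eq_one degree_eq_one
    have irreducible_L : Irreducible L := irreducible_of_degree_eq_one degree_eq_one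
    exact (irreducible_L.coprime_iff_not_dvd.mpr fun hdvd => hQ x (hx.dvd hdvd)).symm

theorem comp_neg_X_eq_self_or_isCoprime_of_dvd_expand_two [NeZero (2 : K)] {Q F : K[X]}
    (hQ : ∀ x, ¬ Q.IsRoot x) (hdeg : F.natDegree ≤ 4) (hFQ : F ∣ expand K 2 Q) :
    F.comp (-X) = F ∨ IsCoprime F (F.comp (-X)) := by
  by_cases hodd : contract 2 F.divX = 0
  · left
    have self_sub_eq_zero : F - F.comp (-X) = 0 := by simp [self_sub_comp_neg_X, hodd]
    exact (sub_eq_zero.mp self_sub_eq_zero).symm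
  · right
    refine isCoprime_comp_neg_X_of_isCoprime_contract_divX (isUnit_iff_ne_zero.mpr two_ne_zero) hFQ
      ?_ ?_
    · exact isCoprime_of_natDegree_le_one_of_forall_not_isRoot hQ X_ne_zero natDegree_X_le
    · exact isCoprime_of_natDegree_le_one_of_forall_not_isRoot hQ hodd
        (natDegree_contract_two_divX_le hdeg)

theorem comp_neg_X_eq_self_of_expand_two_eq_mul [IsDomain R] {Q F G : R[X]} (hF : F ≠ 0)
    (hFG : expand R 2 Q = F * G) (hF_even : F.comp (-X) = F) : G.comp (-X) = G := by
  refine mul_left_cancel₀ hF ?_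
  calc F * G.comp (-X) = (F * G).comp (-X) := by rw [mul_comp, hF_even]
    _ = F * G := by rw [← hFG, expand_two_comp_neg_X]

theorem comp_neg_X_dvd_of_expand_two_eq_mul {Q F G : R[X]}
    (hFG : expand R 2 Q = F * G) (hF : IsCoprime F (F.comp (-X))) : F.comp (-X) ∣ G := by
  refine hF.symm.dvd_of_dvd_mul_left ?_
  rw [← hFG, ← expand_two_comp_neg_X, hFG, mul_comp]
  exact dvd_mul_right _ _

theorem even_or_eq_comp_neg_X_of_expand_two_eq_mul_field [NeZero (2 : K)] {Q F G : K[X]}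
    (hQ : ∀ x, ¬ Q.IsRoot x) (hF : F.Monic) (hG : G.Monic)
    (hFdeg : F.natDegree = 4) (hGdeg : G.natDegree = 4) (hFG : expand K 2 Q = F * G) :
    (F.comp (-X) = F ∧ G.comp (-X) = G) ∨ G = F.comp (-X) := by
  rcases comp_neg_X_eq_self_or_isCoprime_of_dvd_expand_two hQ hFdeg.le ⟨G, hFG⟩ with
    hF_even | hcoprime
  · exact .inl ⟨hF_even, comp_neg_X_eq_self_of_expand_two_eq_mul hF.ne_zero hFG hF_even⟩
  · refine .inr (eq_of_monic_of_dvd_of_natDegree_le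
      (monic_comp_neg_X_of_even_natDegree hF (hFdeg ▸ by decide)) hG
      (comp_neg_X_dvd_of_expand_two_eq_mul hFG hcoprime) ?_)
    simp [natDegree_comp, hFdeg, hGdeg]

theorem even_or_eq_comp_neg_X_of_expand_two_eq_mul [NeZero (2 : K)] [Algebra R K]
    [FaithfulSMul R K] {Q F G : R[X]} (hQ : ∀ x : K, aeval x Q ≠ 0) (hF : F.Monic) (hG : G.Monic)
    (hFdeg : F.natDegree = 4) (hGdeg : G.natDegree = 4) (hFG : expand R 2 Q = F * G) :
    (F.comp (-X) = F ∧ G.comp (-X) = G) ∨ G = F.comp (-X) := by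
  have map_inj : Function.Injective (map (algebraMap R K)) :=
    map_injective _ (FaithfulSMul.algebraMap_injective R K)
  have map_factorization :
      expand K 2 (Q.map (algebraMap R K)) = F.map (algebraMap R K) * G.map (algebraMap R K) := by
    rw [← map_expand, hFG, Polynomial.map_mul]
  have map_cases := even_or_eq_comp_neg_X_of_expand_two_eq_mul_field
    (fun x => by simpa [IsRoot, eval_map_algebraMap] using hQ x)
    (hF.map (algebraMap R K)) (hG.map (algebraMap R K))
    (by rw [hF.natDegree_map, hFdeg]) (by rw [hG.natDegree_map, hGdeg]) map_factorization
  have map_comp_neg_X (H : R[X]) :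
      (H.map (algebraMap R K)).comp (-X) = (H.comp (-X)).map (algebraMap R K) := by
    simp [Polynomial.map_comp]
  simpa only [map_comp_neg_X, map_inj.eq_iff] using map_cases

end DegreeFourFactors

theorem eq_zero_of_sq_eq_mul_sq_of_not_isSquare {K : Type*} [Field K] {d x y : K}
    (hd : ¬ IsSquare d) (h : x ^ 2 = d * y ^ 2) : y = 0 := by
  by_contra hy
  exact hd ⟨x / y, by field_simp; exact h.symm⟩

theorem not_isSquare_two_rat : ¬ IsSquare (2 : ℚ) := by
  exact_mod_cast Rat.isSquare_natCast_iff.not.mpr Nat.prime_two.prime.not_isSquare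

/-- The quartic `Q_{a,u}` with `P_{a,u}(t) = Q_{a,u}(t²)`, whose rational roots govern how
`P_{a,u}` can factor. -/
noncomputable def cuboidQuartic (a u : ℤ) : ℤ[X] :=
  X ^ 4 + C (6 * (u ^ 2 - a ^ 2)) * X ^ 3
    + C ((u ^ 2 - a ^ 2) ^ 2 - 2 * a ^ 2 * u ^ 2) * X ^ 2
    + C (-(6 * (u ^ 2 - a ^ 2) * (a ^ 2 * u ^ 2))) * X
    + C (a ^ 4 * u ^ 4)

theorem expand_two_cuboidQuartic (a u : ℤ) : expand ℤ 2 (cuboidQuartic a u) = cuboidPoly a u := by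
  simp only [cuboidQuartic, cuboidPoly, map_add, map_mul, map_pow, expand_C, expand_X]
  ring

theorem aeval_cuboidQuartic {A : Type*} [CommRing A] (a u : ℤ) (x : A) :
    aeval x (cuboidQuartic a u) =
      (x ^ 2 + 3 * (u ^ 2 - a ^ 2) * x - a ^ 2 * u ^ 2) ^ 2
        - 2 * (2 * (u ^ 2 - a ^ 2) * x) ^ 2 := by
  simp only [cuboidQuartic, aeval_def, eval₂_add, eval₂_mul, eval₂_X_pow, eval₂_X, eval₂_C,
    algebraMap_int_eq, Int.coe_castRingHom]
  push_cast
  ring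

theorem aeval_cuboidQuartic_ne_zero {K : Type*} [Field K] [CharZero K] (h2 : ¬ IsSquare (2 : K))
    {a u : ℤ} (ha : a ≠ 0) (hu : u ≠ 0) (hau : a ^ 2 ≠ u ^ 2) (x : K) :
    aeval x (cuboidQuartic a u) ≠ 0 := by
  intro hroot
  rw [aeval_cuboidQuartic, sub_eq_zero] at hroot
  have sq_sub_sq_ne_zero : (u : K) ^ 2 - a ^ 2 ≠ 0 := by
    rw [sub_ne_zero]
    exact_mod_cast hau.symm
  have x_eq_zero : x = 0 := by
    simpa [sq_sub_sq_ne_zero] using eq_zero_of_sq_eq_mul_sq_of_not_isSquare h2 hroot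
  simp [x_eq_zero, ha, hu] at hroot

theorem cuboidPoly_4_4_factorization_types_general {a u : ℤ} (ha : a ≠ 0) (hu : u ≠ 0)
    (hau : a ^ 2 ≠ u ^ 2) {F G : ℤ[X]} (hF : F.Monic) (hG : G.Monic)
    (hFdeg : F.degree = 4) (hGdeg : G.degree = 4) (hFG : cuboidPoly a u = F * G) :
    (F.comp (-X) = F ∧ G.comp (-X) = G) ∨ G = F.comp (-X) :=
  even_or_eq_comp_neg_X_of_expand_two_eq_mul
    (aeval_cuboidQuartic_ne_zero not_isSquare_two_rat ha hu hau) hF hG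
    (natDegree_eq_of_degree_eq_some hFdeg) (natDegree_eq_of_degree_eq_some hGdeg)
    ((expand_two_cuboidQuartic a u).trans hFG)

theorem cuboidPoly_4_4_factorization_types (a u : ℤ) (ha : 0 < a) (hu : 0 < u)
    (hco : IsCoprime a u) (hne : a ≠ u)
    (F G : Polynomial ℤ) (hF : F.Monic) (hG : G.Monic)
    (hFdeg : F.degree = 4) (hGdeg : G.degree = 4)
    (hFG : cuboidPoly a u = F * G) :
    (F.comp (-X) = F ∧ G.comp (-X) = G) ∨ G = F.comp (-X) ∨ F = G.comp (-X) :=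
  have sq_ne_sq : a ^ 2 ≠ u ^ 2 := mt (pow_left_inj₀ ha.le hu.le two_ne_zero).mp hne
  (cuboidPoly_4_4_factorization_types_general ha.ne' hu.ne' sq_ne_sq
    hF hG hFdeg hGdeg hFG).imp_right .inl
end

section
/- Let a, u be coprime positive integers with a ≠ u, Δ = u² − a², and suppose 3 does not divide au. Then there is no integer X satisfying (X² − 8Δ²)(X² − 9Δ²) = 4a²u²X². -/
/-!
Write `X = e x` and `Δ = e y` with `x`, `y` coprime. The equation makes the product of the coprime
numbers `x² - 8y²` and `x² - 9y²` a square, so up to sign each is a square. Signs are controlled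
modulo `3`, and one is left with Euler's concordance problem: `n² + y²` and `n² + 9y²` are both
squares. By infinite descent this forces `n = 0` or `y = 0`, and `n = 0` would make the right-hand
side of the equation vanish.

Modulo `3`, and up to the symmetry `(n, y) ↦ (3y, n)`, we may assume `3 ∣ y`. Then `(n, y)` and
`(n, 3y)` are legs of primitive Pythagorean triples. Comparing the two parametrisations gives two
factorisations of one number, `g h = k l`, hence `g = a b`, `h = c d`, `k = a c`, `l = b d`. If `y`
is odd the resulting quadratic relations are contradictory modulo `4`. If `y` is even they say that
`a² + d²` and `a² + 9d²` are both squares, where `3 ∣ d` and `d` is a proper divisor of `y`.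
-/

section Coprime

variable {R : Type*} [CommRing R]

lemma exists_eq_mul_of_isCoprime_of_mul_eq_mul {b c x y : R} (hbc : IsCoprime b c)
    (h : c * x = b * y) : ∃ t, x = b * t ∧ y = c * t := by
  obtain ⟨u, v, huv⟩ := hbc
  refine ⟨u * x + v * y, ?_, ?_⟩
  · linear_combination -x * huv + v * h
  · linear_combination -y * huv - u * h

lemma dvd_of_isCoprime_of_dvd_mul_of_dvd_mul {a t x y : R} (hxy : IsCoprime x y)
    (hx : t ∣ a * x) (hy : t ∣ a * y) : t ∣ a := by
  obtain ⟨u, v, huv⟩ := hxy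
  have ha : a = u * (a * x) + v * (a * y) := by linear_combination -a * huv
  rw [ha]
  exact dvd_add (hx.mul_left u) (hy.mul_left v)

lemma not_dvd_left_of_isCoprime_of_dvd_right {p x y : R} (hp : Prime p) (hxy : IsCoprime x y)
    (hy : p ∣ y) : ¬ p ∣ x :=
  fun hx => hp.not_isUnit (hxy.isUnit_of_dvd' hx hy)

variable [IsDomain R] [IsBezout R] [GCDMonoid R]

lemma exists_eq_mul_and_eq_mul_and_isCoprime (x y : R) :
    ∃ d x' y', x = d * x' ∧ y = d * y' ∧ IsCoprime x' y' := by
  obtain ⟨x', y', hx, hy, hunit⟩ := extract_gcd x y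
  exact ⟨gcd x y, x', y', hx, hy, (gcd_isUnit_iff x' y').mp hunit⟩

lemma exists_common_refinement_of_mul_eq_mul {g h k l : R} (heq : g * h = k * l) :
    ∃ a b c d, g = a * b ∧ h = c * d ∧ k = a * c ∧ l = b * d ∧ IsCoprime b c := by
  obtain ⟨a, b, c, rfl, rfl, hbc⟩ := exists_eq_mul_and_eq_mul_and_isCoprime g k
  rcases eq_or_ne a 0 with rfl | ha
  · obtain ⟨d, c', b', rfl, rfl, hcb⟩ := exists_eq_mul_and_eq_mul_and_isCoprime h l
    exact ⟨0, b', c', d, by ring, by ring, by ring, by ring, hcb.symm⟩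
  · have hbh : c * l = b * h := mul_left_cancel₀ ha (by linear_combination -heq)
    obtain ⟨d, rfl, rfl⟩ := exists_eq_mul_of_isCoprime_of_mul_eq_mul hbc hbh
    exact ⟨a, b, c, d, rfl, rfl, rfl, rfl, hbc⟩

end Coprime

section Squares

variable {x y : ℤ}

lemma isSquare_of_isSquare_sq_mul_s8 {d : ℤ} (hd : d ≠ 0) (h : IsSquare (d ^ 2 * x)) :
    IsSquare x := by
  obtain ⟨r, hr⟩ := (isSquare_iff_exists_sq _).mp h
  obtain ⟨s, rfl⟩ : d ∣ r := (Int.pow_dvd_pow_iff two_ne_zero).mp ⟨x, hr.symm⟩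
  exact (isSquare_iff_exists_sq x).mpr
    ⟨s, mul_left_cancel₀ (pow_ne_zero 2 hd) (by linear_combination hr)⟩

lemma three_dvd_and_three_dvd_of_three_dvd_sq_add_sq (h : 3 ∣ x ^ 2 + y ^ 2) :
    3 ∣ x ∧ 3 ∣ y := by
  have hzmod : ∀ r s : ZMod 3, r ^ 2 + s ^ 2 = 0 → r = 0 ∧ s = 0 := by decide
  have hcast := (ZMod.intCast_zmod_eq_zero_iff_dvd _ 3).mpr h
  push_cast at hcast
  exact (hzmod _ _ hcast).imp (ZMod.intCast_zmod_eq_zero_iff_dvd _ 3).mp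
    (ZMod.intCast_zmod_eq_zero_iff_dvd _ 3).mp

lemma three_dvd_or_three_dvd_of_isSquare_sq_add_sq (h : IsSquare (x ^ 2 + y ^ 2)) :
    3 ∣ x ∨ 3 ∣ y := by
  have hzmod : ∀ r s t : ZMod 3, r ^ 2 + s ^ 2 = t * t → r = 0 ∨ s = 0 := by decide
  obtain ⟨z, hz⟩ := h
  have hcast := congrArg (Int.cast : ℤ → ZMod 3) hz
  push_cast at hcast
  exact (hzmod _ _ _ hcast).imp (ZMod.intCast_zmod_eq_zero_iff_dvd _ 3).mp
    (ZMod.intCast_zmod_eq_zero_iff_dvd _ 3).mp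

lemma even_and_sq_emod_four_or_odd_and_sq_emod_four (x : ℤ) :
    Even x ∧ x ^ 2 % 4 = 0 ∨ Odd x ∧ x ^ 2 % 4 = 1 := by
  rcases Int.even_or_odd x with hx | hx
  · obtain ⟨r, rfl⟩ := hx.two_dvd
    exact Or.inl ⟨hx, by rw [mul_pow]; omega⟩
  · exact Or.inr ⟨hx, Int.sq_mod_four_eq_one_of_odd hx⟩

lemma sq_add_sq_pos_of_isCoprime (hxy : IsCoprime x y) : 0 < x ^ 2 + y ^ 2 :=
  hxy.sq_add_sq_ne_zero.symm.lt_of_le (by positivity)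

lemma odd_or_odd_of_isCoprime (hxy : IsCoprime x y) : Odd x ∨ Odd y := by
  by_contra! hodd
  rw [Int.not_odd_iff_even, Int.not_odd_iff_even] at hodd
  exact not_dvd_left_of_isCoprime_of_dvd_right Int.prime_two hxy hodd.2.two_dvd hodd.1.two_dvd

lemma not_four_dvd_sq_add_sq_of_isCoprime (hxy : IsCoprime x y) : ¬ 4 ∣ x ^ 2 + y ^ 2 := by
  have hx := even_and_sq_emod_four_or_odd_and_sq_emod_four x
  have hy := even_and_sq_emod_four_or_odd_and_sq_emod_four y
  rcases odd_or_odd_of_isCoprime hxy with h | h <;>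
    have := Int.sq_mod_four_eq_one_of_odd h <;> omega

lemma eq_one_or_eq_two_of_dvd_eight {t : ℤ} (hpos : 0 < t) (h8 : t ∣ 8) (h4 : ¬ 4 ∣ t) :
    t = 1 ∨ t = 2 := by
  have hle : t ≤ 8 := Int.le_of_dvd (by norm_num) h8
  interval_cases t <;> omega

lemma exists_eq_sq_sub_sq_and_eq_two_mul (hxy : IsCoprime x y) (hx : Odd x)
    (hsq : IsSquare (x ^ 2 + y ^ 2)) :
    ∃ k l, x = k ^ 2 - l ^ 2 ∧ y = 2 * (k * l) ∧ IsCoprime k l := by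
  obtain ⟨z, hz⟩ := hsq
  have htriple : PythagoreanTriple x y |z| := by
    rw [PythagoreanTriple, abs_mul_abs_self]
    linear_combination hz
  have hz0 : z ≠ 0 := by
    rintro rfl
    exact hxy.sq_add_sq_ne_zero (by simpa using hz)
  obtain ⟨k, l, hxkl, hykl, -, hkl, -⟩ := htriple.coprime_classification'
    (Int.isCoprime_iff_gcd_eq_one.mp hxy) (Int.odd_iff.mp hx) (abs_pos.mpr hz0)
  exact ⟨k, l, hxkl, by rw [hykl, mul_assoc], Int.isCoprime_iff_gcd_eq_one.mpr hkl⟩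

lemma odd_of_three_mul_sq_sub_sq_eq {a b c d t : ℤ} (hbc : IsCoprime b c)
    (ha : 3 * b ^ 2 - c ^ 2 = a ^ 2 * t) (hd : 3 * c ^ 2 - b ^ 2 = d ^ 2 * t) :
    Odd a ∧ Odd b ∧ Odd c ∧ Odd d := by
  have hpos : 0 < t := by
    have hsum : 2 * (b ^ 2 + c ^ 2) = (a ^ 2 + d ^ 2) * t := by linear_combination ha + hd
    have hsum_pos : 0 < 2 * (b ^ 2 + c ^ 2) := by linarith [sq_add_sq_pos_of_isCoprime hbc]
    exact pos_of_mul_pos_right (hsum ▸ hsum_pos) (by positivity)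
  have h8 : t ∣ 8 := dvd_of_isCoprime_of_dvd_mul_of_dvd_mul (hbc.pow (m := 2) (n := 2))
    ⟨3 * a ^ 2 + d ^ 2, by linear_combination 3 * ha + hd⟩
    ⟨a ^ 2 + 3 * d ^ 2, by linear_combination ha + 3 * hd⟩
  have hbc4 : ¬ 4 ∣ b ^ 2 + c ^ 2 := not_four_dvd_sq_add_sq_of_isCoprime hbc
  have h4 : ¬ 4 ∣ t := fun h => by
    have := h.mul_left (d ^ 2)
    omega
  have ha4 := even_and_sq_emod_four_or_odd_and_sq_emod_four a
  have hb4 := even_and_sq_emod_four_or_odd_and_sq_emod_four b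
  have hc4 := even_and_sq_emod_four_or_odd_and_sq_emod_four c
  have hd4 := even_and_sq_emod_four_or_odd_and_sq_emod_four d
  obtain rfl | rfl := eq_one_or_eq_two_of_dvd_eight hpos h8 h4
  · exact absurd (by omega) hbc4
  · grind

lemma even_sq_sub_sq_of_three_mul_eq {k l g h : ℤ} (hkl : IsCoprime k l) (hmul : g * h = k * l)
    (hsub : 3 * (k ^ 2 - l ^ 2) = g ^ 2 - h ^ 2) : Even (k ^ 2 - l ^ 2) := by
  obtain ⟨a, b, c, d, rfl, rfl, rfl, rfl, hbc⟩ := exists_common_refinement_of_mul_eq_mul hmul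
  have had : IsCoprime a d := hkl.of_mul_left_left.of_mul_right_right
  obtain ⟨t, ha, hd⟩ := exists_eq_mul_of_isCoprime_of_mul_eq_mul (had.pow (m := 2) (n := 2))
    (show d ^ 2 * (3 * b ^ 2 - c ^ 2) = a ^ 2 * (3 * c ^ 2 - b ^ 2) by linear_combination -hsub)
  obtain ⟨ha, hb, hc, hd⟩ := odd_of_three_mul_sq_sub_sq_eq hbc ha hd
  exact (ha.mul hc).pow.sub_odd (hb.mul hd).pow

end Squares

/-- Euler's concordance condition for the forms `x² + y²` and `x² + 9y²`: both take a square value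
at `(x, y)`. -/
def Concordant (x y : ℤ) : Prop :=
  IsSquare (x ^ 2 + y ^ 2) ∧ IsSquare (x ^ 2 + 9 * y ^ 2)

namespace Concordant

variable {x y : ℤ}

lemma of_mul_left {d : ℤ} (hd : d ≠ 0) (h : Concordant (d * x) (d * y)) : Concordant x y := by
  refine ⟨isSquare_of_isSquare_sq_mul_s8 hd ?_, isSquare_of_isSquare_sq_mul_s8 hd ?_⟩
  · convert h.1 using 1; ring
  · convert h.2 using 1; ring

lemma swap (h : Concordant (3 * x) y) : Concordant y x := by
  refine ⟨isSquare_of_isSquare_sq_mul_s8 three_ne_zero ?_, ?_⟩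
  · convert h.2 using 1; ring
  · convert h.1 using 1; ring

lemma even_of_isCoprime_of_three_dvd (hxy : IsCoprime x y) (h3 : 3 ∣ y)
    (hconc : Concordant x y) : Even y := by
  by_contra hodd
  rw [Int.not_even_iff_odd] at hodd
  have hx3 : IsCoprime x 3 := hxy.of_isCoprime_of_dvd_right h3
  obtain ⟨k, l, hykl, hxkl, hkl⟩ := exists_eq_sq_sub_sq_and_eq_two_mul hxy.symm hodd
    (add_comm (x ^ 2) (y ^ 2) ▸ hconc.1)
  obtain ⟨g, h, hygh, hxgh, -⟩ := exists_eq_sq_sub_sq_and_eq_two_mul (hx3.mul_right hxy).symm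
    (Odd.mul (by decide) hodd)
    (show IsSquare ((3 * y) ^ 2 + x ^ 2) by convert hconc.2 using 1; ring)
  have heven := even_sq_sub_sq_of_three_mul_eq hkl (show g * h = k * l by linarith) (by linarith)
  exact Int.not_odd_iff_even.mpr heven (hykl ▸ hodd)

lemma of_sq_add_sq_eq_sq_mul {t a b c d : ℤ} (had : IsCoprime a d) (hd : 3 ∣ d)
    (hc : a ^ 2 + d ^ 2 = c ^ 2 * t) (hb : a ^ 2 + 9 * d ^ 2 = b ^ 2 * t) : Concordant a d := by
  have hpos : 0 < t :=
    pos_of_mul_pos_right (hc ▸ sq_add_sq_pos_of_isCoprime had) (sq_nonneg c)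
  have h8 : t ∣ 8 := dvd_of_isCoprime_of_dvd_mul_of_dvd_mul (had.pow (m := 2) (n := 2))
    ⟨9 * c ^ 2 - b ^ 2, by linear_combination 9 * hc - hb⟩
    ⟨b ^ 2 - c ^ 2, by linear_combination hb - hc⟩
  have h4 : ¬ 4 ∣ t := fun h =>
    not_four_dvd_sq_add_sq_of_isCoprime had (hc ▸ h.mul_left (c ^ 2))
  obtain rfl | rfl := eq_one_or_eq_two_of_dvd_eight hpos h8 h4
  · exact ⟨⟨c, by linear_combination hc⟩, ⟨b, by linear_combination hb⟩⟩
  · have h3 : 3 ∣ a ^ 2 + c ^ 2 := by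
      have : 3 ∣ d ^ 2 := dvd_pow hd two_ne_zero
      omega
    exact absurd (three_dvd_and_three_dvd_of_three_dvd_sq_add_sq h3).1
      (not_dvd_left_of_isCoprime_of_dvd_right Int.prime_three had hd)

lemma exists_dvd_of_sq_sub_sq_eq {k l g h : ℤ} (hkl : IsCoprime k l) (hl : 3 ∣ l)
    (hmul : g * h = 3 * (k * l)) (hsub : k ^ 2 - l ^ 2 = g ^ 2 - h ^ 2) :
    ∃ a d, IsCoprime a d ∧ 3 ∣ d ∧ d ∣ k * l ∧ Concordant a d := by
  have hk : ¬ 3 ∣ k := not_dvd_left_of_isCoprime_of_dvd_right Int.prime_three hkl hl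
  have hg : ¬ 3 ∣ g := fun hg => by
    have : 3 ∣ k ^ 2 + h ^ 2 := by
      have := dvd_pow hg two_ne_zero
      have := dvd_pow hl two_ne_zero
      omega
    exact hk (three_dvd_and_three_dvd_of_three_dvd_sq_add_sq this).1
  obtain ⟨h', rfl⟩ : 3 ∣ h := (Int.prime_three.dvd_or_dvd ⟨_, hmul⟩).resolve_left hg
  obtain ⟨a, b, c, d, rfl, rfl, rfl, rfl, hbc⟩ := exists_common_refinement_of_mul_eq_mul
    (show g * h' = k * l by linarith)
  have had : IsCoprime a d := hkl.of_mul_left_left.of_mul_right_right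
  have hd : 3 ∣ d := (Int.prime_three.dvd_or_dvd hl).resolve_left fun hb => hg (hb.mul_left a)
  obtain ⟨t, hb, hc⟩ := exists_eq_mul_of_isCoprime_of_mul_eq_mul (hbc.pow (m := 2) (n := 2))
    (show c ^ 2 * (a ^ 2 + 9 * d ^ 2) = b ^ 2 * (a ^ 2 + d ^ 2) by linear_combination hsub)
  exact ⟨a, d, had, hd, ⟨a * c * b, by ring⟩, of_sq_add_sq_eq_sq_mul had hd hc hb⟩

lemma exists_natAbs_lt (hxy : IsCoprime x y) (h3 : 3 ∣ y) (hy : y ≠ 0)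
    (hconc : Concordant x y) :
    ∃ a d, IsCoprime a d ∧ 3 ∣ d ∧ d ≠ 0 ∧ d.natAbs < y.natAbs ∧ Concordant a d := by
  have hx : Odd x := (odd_or_odd_of_isCoprime hxy).resolve_right
    (Int.not_odd_iff_even.mpr (even_of_isCoprime_of_three_dvd hxy h3 hconc))
  have hx3 : IsCoprime x 3 := hxy.of_isCoprime_of_dvd_right h3
  obtain ⟨k, l, hxkl, hykl, hkl⟩ := exists_eq_sq_sub_sq_and_eq_two_mul hxy hx hconc.1
  obtain ⟨g, h, hxgh, hygh, -⟩ := exists_eq_sq_sub_sq_and_eq_two_mul (hx3.mul_right hxy) hx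
    (show IsSquare (x ^ 2 + (3 * y) ^ 2) by convert hconc.2 using 1; ring)
  obtain ⟨a, d, had, hd, ⟨e, he⟩, hconc'⟩ :
      ∃ a d, IsCoprime a d ∧ 3 ∣ d ∧ d ∣ k * l ∧ Concordant a d := by
    have h3kl : 3 ∣ k * l := by omega
    rcases Int.prime_three.dvd_or_dvd h3kl with h3k | h3l
    · rw [mul_comm k l]
      exact exists_dvd_of_sq_sub_sq_eq (g := h) (h := g) hkl.symm h3k (by linarith) (by linarith)
    · exact exists_dvd_of_sq_sub_sq_eq (g := g) (h := h) hkl h3l (by linarith) (by linarith)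
  have hyde : y = d * (2 * e) := by rw [hykl, he]; ring
  have hd0 : d ≠ 0 := left_ne_zero_of_mul (hyde ▸ hy)
  have he0 : 2 * e ≠ 0 := right_ne_zero_of_mul (hyde ▸ hy)
  refine ⟨a, d, had, hd, hd0, ?_, hconc'⟩
  rw [hyde, Int.natAbs_mul]
  exact lt_mul_of_one_lt_right (Int.natAbs_pos.mpr hd0) (by omega)

lemma eq_zero_of_isCoprime_of_three_dvd (hxy : IsCoprime x y) (h3 : 3 ∣ y)
    (h : Concordant x y) : y = 0 := by
  induction hN : y.natAbs using Nat.strong_induction_on generalizing x y with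
  | _ N ih =>
    by_contra hy
    obtain ⟨a, d, had, hd3, hd0, hlt, hconc⟩ := exists_natAbs_lt hxy h3 hy h
    exact hd0 (ih _ (hN ▸ hlt) had hd3 hconc rfl)

theorem eq_zero_or_eq_zero (h : Concordant x y) : x = 0 ∨ y = 0 := by
  obtain ⟨d, x, y, rfl, rfl, hxy⟩ := exists_eq_mul_and_eq_mul_and_isCoprime x y
  rcases eq_or_ne d 0 with rfl | hd
  · simp
  replace h := h.of_mul_left hd
  suffices x = 0 ∨ y = 0 by simpa [hd] using this
  rcases three_dvd_or_three_dvd_of_isSquare_sq_add_sq h.1 with ⟨w, rfl⟩ | hy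
  · have hyw : IsCoprime y w := hxy.of_mul_left_right.symm
    have hw : 3 ∣ w := (three_dvd_or_three_dvd_of_isSquare_sq_add_sq h.swap.1).resolve_left
      (not_dvd_left_of_isCoprime_of_dvd_right Int.prime_three hxy.symm (dvd_mul_right 3 w))
    simp [eq_zero_of_isCoprime_of_three_dvd hyw hw h.swap]
  · exact Or.inr (eq_zero_of_isCoprime_of_three_dvd hxy hy h)

end Concordant

section Quartic

variable {x y : ℤ}

lemma not_neg_sq_and_neg_sq_of_isCoprime (hxy : IsCoprime x y) (m n : ℤ) :
    ¬ (x ^ 2 - 8 * y ^ 2 = -m ^ 2 ∧ x ^ 2 - 9 * y ^ 2 = -n ^ 2) := by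
  rintro ⟨hm, hn⟩
  have hxn : 3 ∣ x ^ 2 + n ^ 2 := ⟨3 * y ^ 2, by linear_combination hn⟩
  obtain ⟨hx3, hn3⟩ := three_dvd_and_three_dvd_of_three_dvd_sq_add_sq hxn
  have hym : 3 ∣ y ^ 2 + m ^ 2 := by
    rw [show y ^ 2 + m ^ 2 = n ^ 2 by linear_combination hm - hn]
    exact dvd_pow hn3 two_ne_zero
  exact not_dvd_left_of_isCoprime_of_dvd_right Int.prime_three hxy
    (three_dvd_and_three_dvd_of_three_dvd_sq_add_sq hym).1 hx3

lemma eq_zero_of_isSquare_quartic_of_isCoprime (hxy : IsCoprime x y)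
    (hsq : IsSquare ((x ^ 2 - 8 * y ^ 2) * (x ^ 2 - 9 * y ^ 2)))
    (hne : (x ^ 2 - 8 * y ^ 2) * (x ^ 2 - 9 * y ^ 2) ≠ 0) : y = 0 := by
  obtain ⟨z, hz⟩ := (isSquare_iff_exists_sq _).mp hsq
  have hcop : IsCoprime (x ^ 2 - 8 * y ^ 2) (x ^ 2 - 9 * y ^ 2) := by
    obtain ⟨u, v, huv⟩ : IsCoprime (x ^ 2) (y ^ 2) := hxy.pow
    exact ⟨9 * u + v, -8 * u - v, by linear_combination huv⟩
  have hpos : 0 < (x ^ 2 - 8 * y ^ 2) * (x ^ 2 - 9 * y ^ 2) := hne.symm.lt_of_le hsq.nonneg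
  obtain ⟨m, hm⟩ := Int.sq_of_isCoprime hcop hz
  obtain ⟨n, hn⟩ := Int.sq_of_isCoprime hcop.symm ((mul_comm _ _).trans hz)
  rcases hm with hm | hm <;> rcases hn with hn | hn
  · have hconc : Concordant n y :=
      ⟨⟨m, by linear_combination hm - hn⟩, ⟨x, by linear_combination -hn⟩⟩
    refine hconc.eq_zero_or_eq_zero.resolve_left ?_
    rintro rfl
    simp [hn] at hne
  · rw [hm, hn] at hpos
    linarith [mul_nonneg (sq_nonneg m) (sq_nonneg n)]
  · rw [hm, hn] at hpos
    linarith [mul_nonneg (sq_nonneg m) (sq_nonneg n)]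
  · exact absurd ⟨hm, hn⟩ (not_neg_sq_and_neg_sq_of_isCoprime hxy m n)

theorem eq_zero_of_isSquare_quartic
    (hsq : IsSquare ((x ^ 2 - 8 * y ^ 2) * (x ^ 2 - 9 * y ^ 2)))
    (hne : (x ^ 2 - 8 * y ^ 2) * (x ^ 2 - 9 * y ^ 2) ≠ 0) : y = 0 := by
  obtain ⟨d, x, y, rfl, rfl, hxy⟩ := exists_eq_mul_and_eq_mul_and_isCoprime x y
  have hscale : ((d * x) ^ 2 - 8 * (d * y) ^ 2) * ((d * x) ^ 2 - 9 * (d * y) ^ 2) =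
      (d ^ 2) ^ 2 * ((x ^ 2 - 8 * y ^ 2) * (x ^ 2 - 9 * y ^ 2)) := by ring
  rw [hscale] at hsq hne
  obtain ⟨hd, hne⟩ := mul_ne_zero_iff.mp hne
  replace hsq := isSquare_of_isSquare_sq_mul_s8 (ne_zero_pow two_ne_zero hd) hsq
  rw [eq_zero_of_isSquare_quartic_of_isCoprime hxy hsq hne, mul_zero]

end Quartic

theorem star_no_solution_of_three_not_dvd_au_general {b D : ℤ} (hb : b ≠ 0) (hD : D ≠ 0) :
    ¬ ∃ X : ℤ, (X ^ 2 - 8 * D ^ 2) * (X ^ 2 - 9 * D ^ 2) = b ^ 2 * X ^ 2 := by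
  rintro ⟨X, hX⟩
  have hX0 : X ≠ 0 := by
    rintro rfl
    exact pow_ne_zero 4 hD (by linarith)
  refine hD (eq_zero_of_isSquare_quartic (x := X) ⟨b * X, by linear_combination hX⟩ ?_)
  rw [hX]
  positivity

theorem star_no_solution_of_three_not_dvd_au (a u : ℤ) (ha : 0 < a) (hu : 0 < u)
    (hco : IsCoprime a u) (hne : a ≠ u) (h3 : ¬ (3 : ℤ) ∣ a * u) :
    ¬ ∃ X : ℤ, (X ^ 2 - 8 * (u ^ 2 - a ^ 2) ^ 2) * (X ^ 2 - 9 * (u ^ 2 - a ^ 2) ^ 2) =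
      4 * a ^ 2 * u ^ 2 * X ^ 2 := by
  rw [show 4 * a ^ 2 * u ^ 2 = (2 * a * u) ^ 2 by ring]
  exact star_no_solution_of_three_not_dvd_au_general (by positivity)
    (sub_ne_zero.mpr fun h => hne ((pow_left_inj₀ ha.le hu.le two_ne_zero).mp h.symm))
end
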